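/- arXiv:2409.15203 — 5 statements merged into one kernel-verified Lean document; each statement's English description precedes it below -/
import Mathlib

section
/- Let Q be a 2D-embedded set (a finite set of points in ℝ² whose pairwise Euclidean distances are all at least 1), and let R = [a,b] × [c,d] be an axis-parallel closed rectangle with both side lengths at least 1 (i.e., b − a ≥ 1 and d − c ≥ 1). Then the number of points of Q lying in R is at most 6·(b − a)·(d − c), i.e., at most 6 times the area of R. -/
open scoped Classical

/-!
The open discs of radius `1 / 2` about the points of a `1`-separated set are pairwise disjoint, and
those about points of a `w × h` rectangle lie in a `(w + 1) × (h + 1)` rectangle. Comparing areas,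
the rectangle contains at most `4 / π * (w + 1) * (h + 1)` of the points; for `1 ≤ w` and `1 ≤ h`
this is at most `16 / π * w * h`, and `16 / π < 6` since `3 < π`.
-/

open MeasureTheory Metric
open scoped ENNReal

theorem encard_mul_le_measure_thickening {X : Type*} [PseudoMetricSpace X] [MeasurableSpace X]
    [OpensMeasurableSpace X] (μ : Measure X) {s : Set X} {r : ℝ} {v : ℝ≥0∞}
    (hs : s.Pairwise fun x y => 2 * r ≤ dist x y) (hv : ∀ x ∈ s, v ≤ μ (ball x r)) :
    s.encard * v ≤ μ (thickening r s) := by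
  have hdisj : Pairwise (Function.onFun Disjoint fun x : s => ball (x : X) r) :=
    fun x y hxy => ball_disjoint_ball <|
      (two_mul r).symm.trans_le (hs x.2 y.2 (Subtype.coe_ne_coe.mpr hxy))
  calc s.encard * v = ∑' _ : s, v := (ENNReal.tsum_set_const s v).symm
    _ ≤ ∑' x : s, μ (ball (x : X) r) := ENNReal.tsum_le_tsum fun x => hv x x.2
    _ ≤ μ (⋃ x : s, ball (x : X) r) :=
      tsum_meas_le_meas_iUnion_of_disjoint μ (fun _ => measurableSet_ball) hdisj
    _ = μ (thickening r s) := by rw [thickening_eq_biUnion_ball, Set.biUnion_eq_iUnion]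

section Box

variable {ι : Type*} [Fintype ι]

theorem thickening_ofLp_preimage_Icc_subset {p : ℝ≥0∞} [Fact (1 ≤ p)] (a b : ι → ℝ) (r : ℝ) :
    thickening r (WithLp.ofLp ⁻¹' Set.Icc a b : Set (PiLp p fun _ : ι => ℝ)) ⊆
      WithLp.ofLp ⁻¹' Set.Icc (fun i => a i - r) (fun i => b i + r) := by
  intro x hx
  obtain ⟨y, ⟨hay, hyb⟩, hxy⟩ := mem_thickening_iff.mp hx
  have hcoord (i : ι) : |x i - y i| ≤ r := (PiLp.dist_apply_le x y i).trans hxy.le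
  refine ⟨fun i => ?_, fun i => ?_⟩
  · linarith [hay i, neg_le_of_abs_le (hcoord i)]
  · linarith [hyb i, le_of_abs_le (hcoord i)]

theorem volume_ofLp_preimage_Icc (a b : ι → ℝ) :
    volume (WithLp.ofLp ⁻¹' Set.Icc a b : Set (EuclideanSpace ℝ ι)) =
      ∏ i, ENNReal.ofReal (b i - a i) := by
  rw [(PiLp.volume_preserving_ofLp ι).measure_preimage measurableSet_Icc.nullMeasurableSet,
    Real.volume_Icc_pi]

theorem encard_mul_volume_ball_le_prod {s : Set (EuclideanSpace ℝ ι)} {r : ℝ}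
    (hs : s.Pairwise fun x y => 2 * r ≤ dist x y) {a b : ι → ℝ}
    (hsub : s ⊆ WithLp.ofLp ⁻¹' Set.Icc a b) :
    s.encard * volume (ball (0 : EuclideanSpace ℝ ι) r) ≤
      ∏ i, ENNReal.ofReal (b i - a i + 2 * r) :=
  calc s.encard * volume (ball (0 : EuclideanSpace ℝ ι) r)
      ≤ volume (thickening r s) := encard_mul_le_measure_thickening volume hs fun x _ =>
        (Measure.addHaar_ball_center volume x r).ge
    _ ≤ volume (WithLp.ofLp ⁻¹' Set.Icc (fun i => a i - r) (fun i => b i + r)) :=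
      measure_mono <| (thickening_subset_of_subset r hsub).trans
        (thickening_ofLp_preimage_Icc_subset a b r)
    _ = ∏ i, ENNReal.ofReal (b i - a i + 2 * r) := by
      rw [volume_ofLp_preimage_Icc]
      congr! 2 with i
      ring

theorem finite_of_pairwise_le_dist_of_subset_box {s : Set (EuclideanSpace ℝ ι)} {r : ℝ}
    (hr : 0 < r) (hs : s.Pairwise fun x y => 2 * r ≤ dist x y) {a b : ι → ℝ}
    (hsub : s ⊆ WithLp.ofLp ⁻¹' Set.Icc a b) : s.Finite := by
  have hprod : s.encard * volume (ball (0 : EuclideanSpace ℝ ι) r) ≠ ∞ :=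
    ne_top_of_le_ne_top (ENNReal.prod_ne_top fun _ _ => ENNReal.ofReal_ne_top)
      (encard_mul_volume_ball_le_prod hs hsub)
  have hcard : (s.encard : ℝ≥0∞) ≠ ∞ := fun htop =>
    hprod <| by rw [htop, ENNReal.top_mul (measure_ball_pos volume 0 hr).ne']
  exact Set.encard_ne_top_iff.mp (ENat.toENNReal_eq_top.not.mp hcard)

theorem ncard_mul_volume_ball_le_prod {s : Set (EuclideanSpace ℝ ι)} {r : ℝ} (hr : 0 < r)
    (hs : s.Pairwise fun x y => 2 * r ≤ dist x y) {a b : ι → ℝ} (hab : a ≤ b)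
    (hsub : s ⊆ WithLp.ofLp ⁻¹' Set.Icc a b) :
    s.ncard * volume.real (ball (0 : EuclideanSpace ℝ ι) r) ≤ ∏ i, (b i - a i + 2 * r) := by
  have hside (i : ι) : 0 ≤ b i - a i + 2 * r := by linarith [hab i]
  have hfinite : s.Finite := finite_of_pairwise_le_dist_of_subset_box hr hs hsub
  have hvolume := encard_mul_volume_ball_le_prod hs hsub
  rw [← hfinite.cast_ncard_eq] at hvolume
  simpa [ENNReal.toReal_prod, hside, measureReal_def] using
    ENNReal.toReal_mono (ENNReal.prod_ne_top fun _ _ => ENNReal.ofReal_ne_top) hvolume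

end Box

theorem ncard_mul_pi_mul_sq_le_of_subset_rectangle {s : Set (EuclideanSpace ℝ (Fin 2))} {r : ℝ}
    (hr : 0 < r) (hs : s.Pairwise fun x y => 2 * r ≤ dist x y) {a b : Fin 2 → ℝ} (hab : a ≤ b)
    (hsub : s ⊆ WithLp.ofLp ⁻¹' Set.Icc a b) :
    s.ncard * (Real.pi * r ^ 2) ≤ (b 0 - a 0 + 2 * r) * (b 1 - a 1 + 2 * r) := by
  have hball : volume.real (ball (0 : EuclideanSpace ℝ (Fin 2)) r) = Real.pi * r ^ 2 := by
    simp [measureReal_def, Real.pi_nonneg, hr.le, mul_comm]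
  simpa only [hball, Fin.prod_univ_two] using ncard_mul_volume_ball_le_prod hr hs hab hsub

theorem embedded_points_in_rectangle_le_six_area_general
    {Q : Set (EuclideanSpace ℝ (Fin 2))} (hQ : Q.Pairwise fun p q => 1 ≤ dist p q)
    {a b c d : ℝ} (hab : 1 ≤ b - a) (hcd : 1 ≤ d - c) :
    {p ∈ Q | p 0 ∈ Set.Icc a b ∧ p 1 ∈ Set.Icc c d}.Finite ∧
      ({p ∈ Q | p 0 ∈ Set.Icc a b ∧ p 1 ∈ Set.Icc c d}.ncard : ℝ) ≤ 6 * (b - a) * (d - c) := by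
  set s := {p ∈ Q | p 0 ∈ Set.Icc a b ∧ p 1 ∈ Set.Icc c d}
  have hsep : s.Pairwise fun p q => 2 * (1 / 2 : ℝ) ≤ dist p q := by
    simpa using hQ.mono (Set.sep_subset Q _)
  have hbox : s ⊆ WithLp.ofLp ⁻¹' Set.Icc ![a, c] ![b, d] := fun p hp => by
    obtain ⟨-, ⟨ha, hb⟩, hc, hd⟩ := hp
    exact ⟨Fin.forall_fin_two.mpr ⟨ha, hc⟩, Fin.forall_fin_two.mpr ⟨hb, hd⟩⟩
  refine ⟨finite_of_pairwise_le_dist_of_subset_box one_half_pos hsep hbox, ?_⟩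
  have hle : ![a, c] ≤ ![b, d] := Fin.forall_fin_two.mpr
    ⟨show a ≤ b by linarith, show c ≤ d by linarith⟩
  have hpack : s.ncard * (Real.pi * (1 / 2) ^ 2) ≤ (b - a + 1) * (d - c + 1) := by
    simpa using ncard_mul_pi_mul_sq_le_of_subset_rectangle one_half_pos hsep hle hbox
  have hsides : (b - a + 1) * (d - c + 1) ≤ (2 * (b - a)) * (2 * (d - c)) := by
    gcongr <;> linarith
  have hpi : (s.ncard : ℝ) * (3 * (1 / 2) ^ 2) ≤ s.ncard * (Real.pi * (1 / 2) ^ 2) := by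
    gcongr
    exact Real.pi_gt_three.le
  have harea : 0 ≤ (b - a) * (d - c) := mul_nonneg (by linarith) (by linarith)
  linarith only [hpi, hpack, hsides, harea]

/-- A 2D-embedded set (finite set of points in ℝ² with pairwise Euclidean
distances at least 1) has at most `6 * area` points in any axis-parallel closed
rectangle whose side lengths are both at least 1. -/
theorem embedded_points_in_rectangle_le_six_area
    (Q : Finset (EuclideanSpace ℝ (Fin 2)))
    (hQ : ∀ p ∈ Q, ∀ q ∈ Q, p ≠ q → 1 ≤ dist p q)
    (a b c d : ℝ) (hab : 1 ≤ b - a) (hcd : 1 ≤ d - c) :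
    ((Q.filter (fun p => p 0 ∈ Set.Icc a b ∧ p 1 ∈ Set.Icc c d)).card : ℝ)
      ≤ 6 * (b - a) * (d - c) := by
  rw [← Set.ncard_coe_finset, Finset.coe_filter]
  exact (embedded_points_in_rectangle_le_six_area_general hQ hab hcd).2
end

section
/- (Tiling Lemma) Let X and Y be finite multisets of points in ℝ², and let w and ℓ be positive integers with w ≥ 4ℓ. Then there exists an offset (x,y) ∈ [0,w]² determining a grid tiling of ℝ² by w × w squares with vertex set {(x + aw, y + bw) : a, b ∈ ℤ} and whose edges lie on the vertical lines {x + aw} × ℝ and horizontal lines ℝ × {y + bw} (a, b ∈ ℤ), such that: (i) at most a (32ℓ²/w²)-fraction of the points of X (counted with multiplicity) are within ℓ∞-distance 2ℓ of some grid vertex, i.e., satisfy ∃ a, b ∈ ℤ with max(|p₁ − (x + aw)|, |p₂ − (y + bw)|) ≤ 2ℓ; and (ii) at most a (16ℓ/w)-fraction of the points of Y (counted with multiplicity) are within Euclidean distance 2ℓ of some grid edge, i.e., satisfy ∃ a ∈ ℤ with |p₁ − (x + aw)| ≤ 2ℓ or ∃ b ∈ ℤ with |p₂ − (y + bw)| ≤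 2ℓ. -/
open scoped Classical

/-!
Modulo `w`, grids of width `w` correspond to points of the torus `(ℝ / wℤ)²`: a point of the plane
is close to a vertex of the grid iff its image lies in a small ball around the point `q` of the
torus, and close to an edge iff its image lies in a small cross centred at `q`. For uniformly
random `q` each of these events has small probability, so the expected numbers of close points are
at most half of the bounds claimed. Two applications of Markov's inequality would just fail to
yield a common `q`, so one averages instead the sum of the two counts, each divided by its
expectation.
-/

open MeasureTheory AddCircle Metric
open scoped ENNReal NNReal

section Averaging

lemma card_filter_eq_sum_indicator {Ω α : Type*} {P : Ω → α → Prop}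
    [∀ ω, DecidablePred (P ω)] (X : Multiset α) (ω : Ω) :
    ((X.filter (P ω)).card : ℝ≥0∞) = (X.map fun p ↦ {ω | P ω p}.indicator 1 ω).sum := by
  induction X using Multiset.induction_on with
  | empty => simp
  | cons p X ih => by_cases hp : P ω p <;> simp [hp, ih, add_comm]

variable {Ω : Type*} [MeasurableSpace Ω] {μ : Measure Ω}

-- No expectation need be nonzero: `a * a⁻¹ ≤ 1` holds for every `a : ℝ≥0∞`, and `b / 0 ≤ n`
-- forces `b = 0`.
lemma exists_forall_le_card_mul_lintegral {ι : Type*} [Fintype ι] [IsProbabilityMeasure μ]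
    {f : ι → Ω → ℝ≥0∞} (hf : ∀ i, AEMeasurable (f i) μ) :
    ∃ ω, ∀ i, f i ω ≤ Fintype.card ι * ∫⁻ ω', f i ω' ∂μ := by
  have lintegral_normalized_le (i : ι) : ∫⁻ ω, f i ω / ∫⁻ ω', f i ω' ∂μ ∂μ ≤ 1 := by
    simp only [div_eq_mul_inv]
    rw [lintegral_mul_const'' _ (hf i)]
    exact ENNReal.mul_inv_le_one _
  obtain ⟨ω, hω⟩ := exists_le_lintegral (μ := μ) (f := fun ω ↦ ∑ i, f i ω / ∫⁻ ω', f i ω' ∂μ)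
    (by fun_prop)
  refine ⟨ω, fun i ↦ ?_⟩
  have hcard : (Fintype.card ι : ℝ≥0∞) ≠ 0 := by
    have := Nonempty.intro i
    simp
  rw [← ENNReal.div_le_iff_le_mul (.inr (ENNReal.natCast_ne_top _)) (.inr hcard)]
  calc f i ω / ∫⁻ ω', f i ω' ∂μ
      ≤ ∑ j, f j ω / ∫⁻ ω', f j ω' ∂μ :=
        Finset.single_le_sum (f := fun j ↦ f j ω / ∫⁻ ω', f j ω' ∂μ)
          (fun _ _ ↦ zero_le) (Finset.mem_univ i)
    _ ≤ ∫⁻ ω, ∑ j, f j ω / ∫⁻ ω', f j ω' ∂μ ∂μ := hω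
    _ = ∑ j, ∫⁻ ω, f j ω / ∫⁻ ω', f j ω' ∂μ ∂μ :=
        lintegral_finsetSum' _ fun j _ ↦ (hf j).div_const _
    _ ≤ ∑ _j : ι, 1 := Finset.sum_le_sum fun j _ ↦ lintegral_normalized_le j
    _ = Fintype.card ι := by simp

variable {α β : Type*} {P : Ω → α → Prop} [∀ ω, DecidablePred (P ω)]
  {Q : Ω → β → Prop} [∀ ω, DecidablePred (Q ω)]

lemma measurable_card_filter (hP : ∀ p, MeasurableSet {ω | P ω p}) (X : Multiset α) :
    Measurable fun ω ↦ ((X.filter (P ω)).card : ℝ≥0∞) := by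
  simp only [card_filter_eq_sum_indicator]
  induction X using Multiset.induction_on with
  | empty => simp
  | cons p X ih => simpa [Pi.add_def] using (measurable_one.indicator (hP p)).add ih

lemma lintegral_card_filter (hP : ∀ p, MeasurableSet {ω | P ω p}) (X : Multiset α) :
    ∫⁻ ω, ((X.filter (P ω)).card : ℝ≥0∞) ∂μ = (X.map fun p ↦ μ {ω | P ω p}).sum := by
  simp only [card_filter_eq_sum_indicator]
  induction X using Multiset.induction_on with
  | empty => simp
  | cons p X ih =>
    simp only [Multiset.map_cons, Multiset.sum_cons]
    rw [lintegral_add_left (measurable_one.indicator (hP p)), lintegral_indicator_one (hP p), ih]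

lemma lintegral_card_filter_le (hP : ∀ p, MeasurableSet {ω | P ω p}) {c : ℝ≥0∞}
    {X : Multiset α} (hc : ∀ p ∈ X, μ {ω | P ω p} ≤ c) :
    ∫⁻ ω, ((X.filter (P ω)).card : ℝ≥0∞) ∂μ ≤ c * X.card := by
  rw [lintegral_card_filter hP, mul_comm, ← nsmul_eq_mul, ← Multiset.card_map]
  refine Multiset.sum_le_card_nsmul _ _ fun m hm ↦ ?_
  obtain ⟨p, hp, rfl⟩ := Multiset.mem_map.1 hm
  exact hc p hp

lemma exists_card_filter_le_and_card_filter_le [IsProbabilityMeasure μ]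
    (hP : ∀ p, MeasurableSet {ω | P ω p}) (hQ : ∀ p, MeasurableSet {ω | Q ω p}) {c d : ℝ≥0}
    {X : Multiset α} {Y : Multiset β}
    (hc : ∀ p ∈ X, μ {ω | P ω p} ≤ c) (hd : ∀ p ∈ Y, μ {ω | Q ω p} ≤ d) :
    ∃ ω, ((X.filter (P ω)).card : ℝ) ≤ 2 * (c * X.card) ∧
      ((Y.filter (Q ω)).card : ℝ) ≤ 2 * (d * Y.card) := by
  obtain ⟨ω, hω⟩ := exists_forall_le_card_mul_lintegral (μ := μ) (ι := Fin 2)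
    (f := ![fun ω ↦ ((X.filter (P ω)).card : ℝ≥0∞), fun ω ↦ ((Y.filter (Q ω)).card : ℝ≥0∞)])
    (Fin.forall_fin_two.2
      ⟨(measurable_card_filter hP X).aemeasurable, (measurable_card_filter hQ Y).aemeasurable⟩)
  simp only [Fintype.card_fin, Nat.cast_ofNat, Fin.forall_fin_two, Matrix.cons_val_zero,
    Matrix.cons_val_one] at hω
  refine ⟨ω, ?_, ?_⟩
  · exact_mod_cast hω.1.trans (mul_le_mul_right (lintegral_card_filter_le hP hc) 2)
  · exact_mod_cast hω.2.trans (mul_le_mul_right (lintegral_card_filter_le hQ hd) 2)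

end Averaging

section Torus

variable {T : ℝ}

lemma dist_coe_addCircle_le_iff {s t r : ℝ} :
    dist (s : AddCircle T) t ≤ r ↔ ∃ a : ℤ, |s - (t + a * T)| ≤ r := by
  have h := Set.ext_iff.1 (coe_real_preimage_closedBall_eq_iUnion T t r) s
  simpa [Real.dist_eq] using h

variable [hT : Fact (0 < T)]

lemma haarAddCircle_closedBall_le (x : AddCircle T) (r : ℝ) :
    haarAddCircle (closedBall x r) ≤ ENNReal.ofReal (2 * r / T) := by
  have hvol : ENNReal.ofReal T * haarAddCircle (closedBall x r) =
      ENNReal.ofReal (min T (2 * r)) := by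
    rw [← volume_closedBall, volume_eq_smul_haarAddCircle, Measure.smul_apply, smul_eq_mul]
  rw [ENNReal.ofReal_div_of_pos hT.out, ENNReal.le_div_iff_mul_le (by simp [hT.out]) (by simp),
    mul_comm, hvol]
  exact ENNReal.ofReal_le_ofReal (min_le_right _ _)

lemma haarAddCircle_prod_closedBall_le (p : AddCircle T × AddCircle T) (r : ℝ) :
    (haarAddCircle.prod haarAddCircle) (closedBall p r) ≤ ENNReal.ofReal (2 * r / T) ^ 2 := by
  rw [← Prod.mk.eta (p := p), ← closedBall_prod_same, Measure.prod_prod, sq]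
  gcongr <;> exact haarAddCircle_closedBall_le _ _

lemma haarAddCircle_prod_cross_le (p : AddCircle T × AddCircle T) (r : ℝ) :
    (haarAddCircle.prod haarAddCircle) {q | dist p.1 q.1 ≤ r ∨ dist p.2 q.2 ≤ r} ≤
      2 * ENNReal.ofReal (2 * r / T) := by
  have hcross : {q : AddCircle T × AddCircle T | dist p.1 q.1 ≤ r ∨ dist p.2 q.2 ≤ r} =
      closedBall p.1 r ×ˢ Set.univ ∪ Set.univ ×ˢ closedBall p.2 r := by
    ext q
    simp [dist_comm]
  rw [hcross, two_mul]
  refine (measure_union_le _ _).trans (add_le_add ?_ ?_) <;>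
    simpa using haarAddCircle_closedBall_le _ _

theorem exists_torus_card_filter_dist_le (X Y : Multiset (AddCircle T × AddCircle T)) {r : ℝ}
    (hr : 0 ≤ r) :
    ∃ q : AddCircle T × AddCircle T,
      ((X.filter fun p ↦ dist p q ≤ r).card : ℝ) ≤ 8 * r ^ 2 / T ^ 2 * X.card ∧
      ((Y.filter fun p ↦ dist p.1 q.1 ≤ r ∨ dist p.2 q.2 ≤ r).card : ℝ) ≤
        8 * r / T * Y.card := by
  have hball (p : AddCircle T × AddCircle T) : {q | dist p q ≤ r} = closedBall p r := by
    ext q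
    simp [dist_comm]
  have hc : ((2 * r / T).toNNReal : ℝ) = 2 * r / T :=
    Real.coe_toNNReal _ (div_nonneg (by positivity) hT.out.le)
  obtain ⟨q, hX, hY⟩ := exists_card_filter_le_and_card_filter_le
    (μ := haarAddCircle.prod haarAddCircle) (X := X) (Y := Y)
    (P := fun q p : AddCircle T × AddCircle T ↦ dist p q ≤ r)
    (Q := fun q p : AddCircle T × AddCircle T ↦ dist p.1 q.1 ≤ r ∨ dist p.2 q.2 ≤ r)
    (c := (2 * r / T).toNNReal ^ 2) (d := 2 * (2 * r / T).toNNReal)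
    (fun p ↦ hball p ▸ measurableSet_closedBall)
    (fun p ↦ by measurability)
    (fun p _ ↦ by simpa [hball, ENNReal.ofReal] using haarAddCircle_prod_closedBall_le p r)
    (fun p _ ↦ by simpa [ENNReal.ofReal] using haarAddCircle_prod_cross_le p r)
  refine ⟨q, hX.trans_eq ?_, hY.trans_eq ?_⟩
  · push_cast [hc]
    ring
  · push_cast [hc]
    ring

end Torus

theorem tiling_lemma_general (X Y : Multiset (ℝ × ℝ)) {w r : ℝ} (hw : 0 < w) (hr : 0 ≤ r) :
    ∃ x y : ℝ, x ∈ Set.Ico 0 w ∧ y ∈ Set.Ico 0 w ∧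
      ((X.filter (fun p =>
          ∃ a b : ℤ, max |p.1 - (x + a * w)| |p.2 - (y + b * w)| ≤ r)).card : ℝ)
        ≤ 8 * r ^ 2 / w ^ 2 * X.card ∧
      ((Y.filter (fun p =>
          (∃ a : ℤ, |p.1 - (x + a * w)| ≤ r) ∨
          (∃ b : ℤ, |p.2 - (y + b * w)| ≤ r))).card : ℝ)
        ≤ 8 * r / w * Y.card := by
  have : Fact (0 < w) := ⟨hw⟩
  have exists_lift (z : AddCircle w) : ∃ x ∈ Set.Ico 0 w, (x : AddCircle w) = z := by
    simpa using (coe_image_Ico_eq w 0).ge (Set.mem_univ z)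
  let proj : ℝ × ℝ → AddCircle w × AddCircle w := Prod.map (↑) (↑)
  obtain ⟨⟨u, v⟩, hX, hY⟩ := exists_torus_card_filter_dist_le (X.map proj) (Y.map proj) hr
  obtain ⟨x, hx, rfl⟩ := exists_lift u
  obtain ⟨y, hy, rfl⟩ := exists_lift v
  refine ⟨x, y, hx, hy, ?_, ?_⟩
  · simpa [Multiset.filter_map, proj, Function.comp_def, Prod.dist_eq, dist_coe_addCircle_le_iff]
      using hX
  · simpa [Multiset.filter_map, proj, Function.comp_def, dist_coe_addCircle_le_iff] using hY

/-- **Tiling Lemma.** For finite multisets `X, Y` of points in ℝ² and positive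
integers `w ≥ 4ℓ`, there is an offset `(x, y) ∈ [0,w]²` for the width-`w` grid
tiling such that at most a `32ℓ²/w²`-fraction of the points of `X` are within
ℓ∞-distance `2ℓ` of a grid vertex, and at most a `16ℓ/w`-fraction of the points
of `Y` are within distance `2ℓ` of a grid edge. -/
theorem tiling_lemma (X Y : Multiset (ℝ × ℝ)) (w ℓ : ℕ)
    (hw : 0 < w) (hℓ : 0 < ℓ) (hwl : 4 * ℓ ≤ w) :
    ∃ x y : ℝ, x ∈ Set.Icc (0 : ℝ) w ∧ y ∈ Set.Icc (0 : ℝ) w ∧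
      ((X.filter (fun p =>
          ∃ a b : ℤ, max |p.1 - (x + a * w)| |p.2 - (y + b * w)| ≤ 2 * ℓ)).card : ℝ)
        ≤ (32 * ℓ ^ 2 / w ^ 2) * X.card ∧
      ((Y.filter (fun p =>
          (∃ a : ℤ, |p.1 - (x + a * w)| ≤ 2 * ℓ) ∨
          (∃ b : ℤ, |p.2 - (y + b * w)| ≤ 2 * ℓ))).card : ℝ)
        ≤ (16 * ℓ / w) * Y.card := by
  obtain ⟨x, y, hx, hy, hX, hY⟩ :=
    tiling_lemma_general X Y (w := w) (r := 2 * ℓ) (by positivity) (by positivity)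
  exact ⟨x, y, Set.Ico_subset_Icc_self hx, Set.Ico_subset_Icc_self hy,
    hX.trans_eq (by ring), hY.trans_eq (by ring)⟩
end

section
/- Let p ∈ ℝ² and let ℓ, w be positive reals with w ≥ 4ℓ. Then the two-dimensional Lebesgue measure of the set of offsets (x,y) ∈ [0,w]² for which p is within distance 2ℓ of some grid line of the width-w grid with origin (x,y) — i.e., for which there exists an integer a with |p₁ − (x + aw)| ≤ 2ℓ, or an integer b with |p₂ − (y + bw)| ≤ 2ℓ — is exactly w² − (w − 4ℓ)²; in particular this measure is strictly less than 8ℓw. -/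
open MeasureTheory

/-!
Whether a coordinate of `p` is close to a grid line depends only on the class of the offset in the
circle `ℝ / wℤ`, where closeness means membership in a closed ball. The offsets far from every grid
line thus correspond to a product of two ball complements in the torus `(ℝ / wℤ)²`, and the square
`[0, w]²` maps onto that torus preserving measure.
-/

open Metric Set

theorem measure_compl_prod {α β : Type*} [MeasurableSpace α] [MeasurableSpace β]
    {μ : Measure α} {ν : Measure β} [SFinite ν] {s : Set α} {t : Set β}
    (hs : MeasurableSet s) (ht : MeasurableSet t) (h : μ s * ν t ≠ ⊤) :
    μ.prod ν (s ×ˢ t)ᶜ = μ univ * ν univ - μ s * ν t := by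
  rw [measure_compl (hs.prod ht) (by rwa [Measure.prod_prod]), ← univ_prod_univ,
    Measure.prod_prod, Measure.prod_prod]

theorem coe_mem_addCircle_closedBall_iff {T c x r : ℝ} :
    (x : AddCircle T) ∈ closedBall (c : AddCircle T) r ↔ ∃ a : ℤ, |c - (x + a * T)| ≤ r := by
  rw [← mem_preimage, AddCircle.coe_real_preimage_closedBall_eq_iUnion]
  simp only [mem_iUnion, mem_closedBall, Real.dist_eq, zsmul_eq_mul]
  refine (Equiv.neg ℤ).exists_congr fun a => ?_
  rw [abs_sub_comm, Equiv.neg_apply, Int.cast_neg]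
  ring_nf

section Torus

variable {S T : ℝ} [Fact (0 < S)] [Fact (0 < T)]

theorem volume_compl_addCircle_closedBall (x : AddCircle T) {r : ℝ} (hr : 0 ≤ r) :
    volume (closedBall x r)ᶜ = ENNReal.ofReal (T - 2 * r) := by
  have hT : 0 < T := Fact.out
  rw [measure_compl measurableSet_closedBall (measure_ne_top _ _), AddCircle.measure_univ,
    AddCircle.volume_closedBall, ← ENNReal.ofReal_sub _ (by positivity)]
  rcases le_total T (2 * r) with h | h
  · rw [min_eq_left h, sub_self, ENNReal.ofReal_zero, ENNReal.ofReal_of_nonpos (by linarith)]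
  · rw [min_eq_right h]

theorem measurePreserving_coe_addCircle_restrict_Icc (t : ℝ) :
    MeasurePreserving ((↑) : ℝ → AddCircle T) (volume.restrict (Icc t (t + T))) := by
  rw [← Measure.restrict_congr_set Ioc_ae_eq_Icc]
  exact AddCircle.measurePreserving_mk T t

theorem measurePreserving_prodMap_coe_addCircle_restrict_Icc (s t : ℝ) :
    MeasurePreserving (Prod.map ((↑) : ℝ → AddCircle S) ((↑) : ℝ → AddCircle T))
      (volume.restrict (Icc s (s + S) ×ˢ Icc t (t + T))) := by
  rw [Measure.volume_eq_prod, ← Measure.prod_restrict]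
  exact (measurePreserving_coe_addCircle_restrict_Icc s).prod
    (measurePreserving_coe_addCircle_restrict_Icc t)

theorem volume_compl_prod_compl_addCircle_closedBall (x : AddCircle S) (y : AddCircle T) {r s : ℝ}
    (hr : 0 ≤ r) (hs : 0 ≤ s) (hrS : 2 * r ≤ S) (hsT : 2 * s ≤ T) :
    volume ((closedBall x r)ᶜ ×ˢ (closedBall y s)ᶜ)ᶜ
      = ENNReal.ofReal (S * T - (S - 2 * r) * (T - 2 * s)) := by
  have hr_compl := volume_compl_addCircle_closedBall x hr
  have hs_compl := volume_compl_addCircle_closedBall y hs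
  have hS : 0 < S := Fact.out
  rw [Measure.volume_eq_prod, measure_compl_prod measurableSet_closedBall.compl
      measurableSet_closedBall.compl (by finiteness),
    AddCircle.measure_univ, AddCircle.measure_univ, hr_compl, hs_compl,
    ← ENNReal.ofReal_mul hS.le, ← ENNReal.ofReal_mul (sub_nonneg.2 hrS),
    ENNReal.ofReal_sub _ (mul_nonneg (sub_nonneg.2 hrS) (sub_nonneg.2 hsT))]

end Torus

theorem volume_offsets_near_rectangular_grid (p : ℝ × ℝ) {w v r s : ℝ} (hw : 0 < w) (hv : 0 < v)
    (hr : 0 ≤ r) (hs : 0 ≤ s) (hrw : 2 * r ≤ w) (hsv : 2 * s ≤ v) :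
    volume {o : ℝ × ℝ | o.1 ∈ Icc 0 w ∧ o.2 ∈ Icc 0 v ∧
        ((∃ a : ℤ, |p.1 - (o.1 + a * w)| ≤ r) ∨ (∃ b : ℤ, |p.2 - (o.2 + b * v)| ≤ s))}
      = ENNReal.ofReal (w * v - (w - 2 * r) * (v - 2 * s)) := by
  have : Fact (0 < w) := ⟨hw⟩
  have : Fact (0 < v) := ⟨hv⟩
  let far : Set (AddCircle w × AddCircle v) :=
    (closedBall (p.1 : AddCircle w) r)ᶜ ×ˢ (closedBall (p.2 : AddCircle v) s)ᶜ
  have hfar : MeasurableSet far :=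
    measurableSet_closedBall.compl.prod measurableSet_closedBall.compl
  calc
    _ = volume (Prod.map (↑) (↑) ⁻¹' farᶜ ∩ Icc 0 w ×ˢ Icc 0 v) := by
      congr 1
      ext o
      simp only [far, ← coe_mem_addCircle_closedBall_iff, mem_ofPred_eq, mem_inter_iff,
        mem_preimage, mem_compl_iff, mem_prod, Prod.map_fst, Prod.map_snd]
      tauto
    _ = volume farᶜ := by
      rw [← Measure.restrict_apply' (measurableSet_Icc.prod measurableSet_Icc)]
      have hmp := measurePreserving_prodMap_coe_addCircle_restrict_Icc (S := w) (T := v) 0 0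
      simpa only [zero_add] using hmp.measure_preimage hfar.compl.nullMeasurableSet
    _ = ENNReal.ofReal (w * v - (w - 2 * r) * (v - 2 * s)) :=
      volume_compl_prod_compl_addCircle_closedBall _ _ hr hs hrw hsv

/-- For a fixed point `p ∈ ℝ²` and reals `0 < ℓ`, `0 < w` with `w ≥ 4ℓ`, the
set of offsets `(x,y) ∈ [0,w]²` for which `p` is within distance `2ℓ` of some
grid line of the width-`w` grid with origin `(x,y)` has Lebesgue measure
exactly `w² − (w − 4ℓ)²`, which is strictly less than `8ℓw`. -/
theorem measure_offsets_near_edge (p : ℝ × ℝ) (ℓ w : ℝ)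
    (hℓ : 0 < ℓ) (hw : 0 < w) (hwl : 4 * ℓ ≤ w) :
    volume {o : ℝ × ℝ | o.1 ∈ Set.Icc (0 : ℝ) w ∧ o.2 ∈ Set.Icc (0 : ℝ) w ∧
        ((∃ a : ℤ, |p.1 - (o.1 + a * w)| ≤ 2 * ℓ) ∨
         (∃ b : ℤ, |p.2 - (o.2 + b * w)| ≤ 2 * ℓ))}
      = ENNReal.ofReal (w ^ 2 - (w - 4 * ℓ) ^ 2) ∧
    volume {o : ℝ × ℝ | o.1 ∈ Set.Icc (0 : ℝ) w ∧ o.2 ∈ Set.Icc (0 : ℝ) w ∧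
        ((∃ a : ℤ, |p.1 - (o.1 + a * w)| ≤ 2 * ℓ) ∨
         (∃ b : ℤ, |p.2 - (o.2 + b * w)| ≤ 2 * ℓ))}
      < ENNReal.ofReal (8 * ℓ * w) := by
  have hvol := volume_offsets_near_rectangular_grid p (r := 2 * ℓ) (s := 2 * ℓ) hw hw
    (by positivity) (by positivity) (by linarith) (by linarith)
  have harea : w * w - (w - 2 * (2 * ℓ)) * (w - 2 * (2 * ℓ)) = w ^ 2 - (w - 4 * ℓ) ^ 2 := by ring
  have hlt : w ^ 2 - (w - 4 * ℓ) ^ 2 < 8 * ℓ * w := by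
    have hsq : 0 < 16 * ℓ ^ 2 := by positivity
    linear_combination hsq
  rw [harea] at hvol
  exact ⟨hvol, hvol.trans_lt <| (ENNReal.ofReal_lt_ofReal_iff (by positivity)).2 hlt⟩
end

section
/- (Separator Lemma) Let ℓ be a positive real number, let n ≥ 10 be an integer, and let V be a 2D-embedded set of n points in ℝ² (pairwise Euclidean distances all at least 1). Then there exist two parallel lines, either both vertical (of the form x = c₁ and x = c₂ with c₁ < c₂) or both horizontal (y = c₁ and y = c₂ with c₁ < c₂), such that: (i) c₂ − c₁ ≥ ℓ; (ii) the open strip strictly between the two lines contains at most 8ℓ√n points of V; (iii) each of the two open regions on the outer sides of the lines contains at most 9n/10 points of V; and (iv) no point of V lies on either line. -/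
open scoped Classical

/-!
In dimension `d`, cut off the `k < n / (5d)` extreme points at both ends of each coordinate
direction. More than `3n / 5` points remain, in an axis-parallel box. By a packing bound this box
has a side of length at least `w = n ^ (1 / d) / (4d)`. The side is covered by the closures of
consecutive open strips of width `ℓ`, at least `w / ℓ` of them, so one strip contains at most
`nℓ / w` points. As it touches the side, at least `k + 1` points are not beyond it at either end.
-/

section Counting

open scoped Finset

variable {α β : Type*} (V : Finset α) (f : α → β)

section Preorder

variable [Preorder β] [DecidableLT β] [DecidableLE β]

lemma card_filter_lt_add_card_filter_ge_le_card {b c : β} (hcb : c ≤ b) :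
    #{p ∈ V | f p < c} + #{p ∈ V | b ≤ f p} ≤ #V := by
  have hdisj : Disjoint {p ∈ V | f p < c} {p ∈ V | b ≤ f p} :=
    Finset.disjoint_filter.2 fun _ _ hlt hge => (hlt.trans_le hcb).not_ge hge
  rw [← Finset.card_union_of_disjoint hdisj]
  exact Finset.card_le_card (Finset.union_subset (V.filter_subset _) (V.filter_subset _))

lemma card_filter_gt_add_card_filter_le_le_card {a c : β} (hac : a ≤ c) :
    #{p ∈ V | c < f p} + #{p ∈ V | f p ≤ a} ≤ #V :=
  card_filter_lt_add_card_filter_ge_le_card (β := βᵒᵈ) V f hac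

end Preorder

variable [LinearOrder β]

lemma exists_card_filter_lt_le_and_lt_card_filter_le {k : ℕ} (hk : k < #V) :
    ∃ a, #{p ∈ V | f p < a} ≤ k ∧ k < #{p ∈ V | f p ≤ a} := by
  have hV : V.Nonempty := Finset.card_pos.1 (by lia)
  obtain ⟨top, htop, hle_top⟩ := V.exists_max_image f hV
  have hne : {p ∈ V | k < #{q ∈ V | f q ≤ f p}}.Nonempty :=
    ⟨top, Finset.mem_filter.2 ⟨htop, by rwa [Finset.filter_true_of_mem hle_top]⟩⟩
  obtain ⟨m, hm, hmin⟩ := Finset.exists_min_image _ f hne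
  refine ⟨f m, ?_, (Finset.mem_filter.1 hm).2⟩
  by_contra! hlt
  obtain ⟨v, hv, hmax⟩ := Finset.exists_max_image _ f
    (Finset.card_pos.1 (Nat.zero_lt_of_lt hlt))
  obtain ⟨hvV, hvm⟩ := Finset.mem_filter.1 hv
  have hsub : {p ∈ V | f p < f m} ⊆ {p ∈ V | f p ≤ f v} := fun p hp =>
    Finset.mem_filter.2 ⟨(Finset.mem_filter.1 hp).1, hmax p hp⟩
  exact (hmin v (Finset.mem_filter.2 ⟨hvV, hlt.trans_le (Finset.card_le_card hsub)⟩)).not_gt hvm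

lemma exists_card_filter_gt_le_and_lt_card_filter_ge {k : ℕ} (hk : k < #V) :
    ∃ b, #{p ∈ V | b < f p} ≤ k ∧ k < #{p ∈ V | b ≤ f p} :=
  exists_card_filter_lt_le_and_lt_card_filter_le (β := βᵒᵈ) V f hk

lemma card_le_card_filter_Icc_add {ι : Type*} [Fintype ι] (x : α → ι → β) {a b : ι → β} {k : ℕ}
    (ha : ∀ i, #{p ∈ V | x p i < a i} ≤ k) (hb : ∀ i, #{p ∈ V | b i < x p i} ≤ k) :
    #V ≤ #{p ∈ V | x p ∈ Set.Icc a b} + 2 * Fintype.card ι * k := by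
  have hcover : {p ∈ V | x p ∉ Set.Icc a b} ⊆
      Finset.univ.biUnion fun i => {p ∈ V | x p i < a i} ∪ {p ∈ V | b i < x p i} := by
    intro p
    simp only [Finset.mem_filter, Finset.mem_biUnion, Finset.mem_union, Finset.mem_univ, true_and,
      Set.mem_Icc, Pi.le_def, ← forall_and, not_forall, not_and_or, not_le]
    rintro ⟨hp, i, hi⟩
    exact ⟨i, hi.imp (⟨hp, ·⟩) (⟨hp, ·⟩)⟩
  have hout : #{p ∈ V | x p ∉ Set.Icc a b} ≤ Fintype.card ι * (k + k) :=
    (Finset.card_le_card hcover).trans <| Finset.card_biUnion_le_card_mul _ _ _ fun i _ =>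
      (Finset.card_union_le _ _).trans (add_le_add (ha i) (hb i))
  linarith [V.card_filter_add_card_filter_not (x · ∈ Set.Icc a b)]

end Counting

section Packing

open scoped Finset

variable {ι : Type*} [Fintype ι]

lemma exists_dist_le_sqrt_card_mul_dist [Nonempty ι] (p q : EuclideanSpace ℝ ι) :
    ∃ i, dist p q ≤ √(Fintype.card ι) * dist (p i) (q i) := by
  obtain ⟨i, -, hi⟩ := Finset.univ.exists_max_image (fun i => dist (p i) (q i))
    Finset.univ_nonempty
  refine ⟨i, ?_⟩
  calc dist p q = √(∑ j, dist (p j) (q j) ^ 2) := EuclideanSpace.dist_eq p q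
    _ ≤ √(Fintype.card ι * dist (p i) (q i) ^ 2) := by
      gcongr
      rw [← nsmul_eq_mul]
      exact Finset.sum_le_card_nsmul _ _ _ fun j hj => by gcongr; exact hi j hj
    _ = √(Fintype.card ι) * dist (p i) (q i) := by
      rw [Real.sqrt_mul (Nat.cast_nonneg _), Real.sqrt_sq dist_nonneg]

-- The cubes of side `1 / √d` of a grid have diameter `1`, so each contains at most one point.
lemma card_le_of_pairwise_one_le_dist_of_mem_box {S : Finset (EuclideanSpace ℝ ι)}
    (hS : (S : Set (EuclideanSpace ℝ ι)).Pairwise (1 ≤ dist · ·)) {a : ι → ℝ} {w : ℝ}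
    (hbox : ∀ p ∈ S, ∀ i, p i ∈ Set.Icc (a i) (a i + w)) :
    #S ≤ (⌊√(Fintype.card ι) * w⌋₊ + 1) ^ Fintype.card ι := by
  set D : ℝ := √(Fintype.card ι)
  have hnonneg : ∀ p ∈ S, ∀ i, 0 ≤ D * (p i - a i) := fun p hp i =>
    mul_nonneg (Real.sqrt_nonneg _) (sub_nonneg.2 (hbox p hp i).1)
  let cell (p : EuclideanSpace ℝ ι) (i : ι) : ℕ := ⌊D * (p i - a i)⌋₊
  have hmaps : ∀ p ∈ S, cell p ∈ Fintype.piFinset fun _ => Finset.range (⌊D * w⌋₊ + 1) := by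
    refine fun p hp => Fintype.mem_piFinset.2 fun i => Finset.mem_range_succ_iff.2 ?_
    exact Nat.floor_le_floor (mul_le_mul_of_nonneg_left (sub_le_iff_le_add'.2 (hbox p hp i).2)
      (Real.sqrt_nonneg _))
  have hinj : Set.InjOn cell S := by
    intro p hp q hq hpq
    by_contra hne
    have : Nonempty ι := not_isEmpty_iff.1 fun _ => hne (Subsingleton.elim p q)
    obtain ⟨i, hi⟩ := exists_dist_le_sqrt_card_mul_dist p q
    have hfloor : ⌊D * (p i - a i)⌋ = ⌊D * (q i - a i)⌋ := by
      rw [← Int.natCast_floor_eq_floor (hnonneg p hp i),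
        ← Int.natCast_floor_eq_floor (hnonneg q hq i)]
      exact congrArg Nat.cast (congrFun hpq i)
    have hlt : D * dist (p i) (q i) < 1 := by
      have h := Int.abs_sub_lt_one_of_floor_eq_floor hfloor
      rwa [← mul_sub, sub_sub_sub_cancel_right, abs_mul, abs_of_nonneg (Real.sqrt_nonneg _),
        ← Real.dist_eq] at h
    exact ((hS hp hq hne).trans hi).not_gt hlt
  simpa using Finset.card_le_card_of_injOn cell hmaps hinj

lemma exists_le_sub_of_card_filter_le {V : Finset (EuclideanSpace ℝ ι)}
    (hV : (V : Set (EuclideanSpace ℝ ι)).Pairwise (1 ≤ dist · ·)) {a b : ι → ℝ} {k : ℕ}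
    (ha : ∀ i, #{p ∈ V | p i < a i} ≤ k) (hb : ∀ i, #{p ∈ V | b i < p i} ≤ k) {w : ℝ}
    (hcard : (⌊√(Fintype.card ι) * w⌋₊ + 1) ^ Fintype.card ι + 2 * Fintype.card ι * k < #V) :
    ∃ i, w ≤ b i - a i := by
  by_contra! hw
  have hcentral := card_le_card_filter_Icc_add V (fun p i => p i) ha hb
  have hpack := card_le_of_pairwise_one_le_dist_of_mem_box
    (S := {p ∈ V | (fun i => p i) ∈ Set.Icc a b}) (a := a) (w := w)
    (hV.mono (Finset.coe_subset.2 (V.filter_subset _))) fun p hp i => by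
      obtain ⟨-, hap, hpb⟩ := Finset.mem_filter.1 hp
      exact ⟨hap i, by linarith [hpb i, hw i]⟩
  lia

end Packing

section SparseStrip

open scoped Finset

lemma exists_mem_Ioo_forall_ne_add_mul {s : Set ℝ} (hs : s.Countable) {u v : ℝ}
    (huv : u < v) (ℓ : ℝ) : ∃ t ∈ Set.Ioo u v, ∀ x ∈ s, ∀ j : ℕ, x ≠ t + j * ℓ := by
  have hbad : (⋃ j : ℕ, (· - j * ℓ) '' s).Countable :=
    Set.countable_iUnion fun j => hs.image _
  obtain ⟨t, ht, htuv⟩ := (hbad.dense_compl ℝ).exists_between huv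
  refine ⟨t, htuv, fun x hx j hxt => ht (Set.mem_iUnion.2 ⟨j, x, hx, ?_⟩)⟩
  exact sub_eq_of_eq_add hxt

variable {α : Type*} (V : Finset α) (f : α → ℝ) {ℓ : ℝ}

lemma exists_card_filter_strip_mul_le_card (hℓ : 0 < ℓ) (t : ℝ) {m : ℕ} (hm : m ≠ 0) :
    ∃ j < m, #{p ∈ V | t + j * ℓ < f p ∧ f p < t + j * ℓ + ℓ} * m ≤ #V := by
  obtain ⟨j, hj, hfiber⟩ := Finset.exists_card_fiber_le_of_card_le_nsmul
    (s := V) (t := Finset.range m) (f := fun p => ⌊(f p - t) / ℓ⌋₊) (b := (#V / m : ℚ))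
    (Finset.nonempty_range_iff.2 hm) (by
      rw [Finset.card_range, nsmul_eq_mul, mul_div_cancel₀ _ (Nat.cast_ne_zero.2 hm)])
  refine ⟨j, Finset.mem_range.1 hj, ?_⟩
  have hsub : {p ∈ V | t + j * ℓ < f p ∧ f p < t + j * ℓ + ℓ} ⊆
      {p ∈ V | ⌊(f p - t) / ℓ⌋₊ = j} := by
    refine Finset.monotone_filter_right V fun p _ hp => ?_
    have hj_le : (j : ℝ) ≤ (f p - t) / ℓ := (le_div_iff₀ hℓ).2 (by linarith [hp.1])
    rw [Nat.floor_eq_iff ((Nat.cast_nonneg j).trans hj_le), div_lt_iff₀ hℓ]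
    exact ⟨hj_le, by linarith [hp.2]⟩
  rw [le_div_iff₀ (by positivity)] at hfiber
  exact (Nat.mul_le_mul_right m (Finset.card_le_card hsub)).trans (by exact_mod_cast hfiber)

lemma exists_sparse_strip (hℓ : 0 < ℓ) {a b : ℝ} (hab : a ≤ b) :
    ∃ c ≤ b, a ≤ c + ℓ ∧ #{p ∈ V | c < f p ∧ f p < c + ℓ} * (b - a) ≤ #V * ℓ ∧
      ∀ p ∈ V, f p ≠ c ∧ f p ≠ c + ℓ := by
  set N := ⌊(b - a) / ℓ⌋₊
  have hN_le : N * ℓ ≤ b - a :=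
    (le_div_iff₀ hℓ).1 (Nat.floor_le (div_nonneg (sub_nonneg.2 hab) hℓ.le))
  have hle_N : b - a ≤ (N + 1) * ℓ := ((div_lt_iff₀ hℓ).1 (Nat.lt_floor_add_one _)).le
  obtain ⟨t, ⟨ht_gt, ht_lt⟩, havoid⟩ :=
    exists_mem_Ioo_forall_ne_add_mul (V.image f).countable_toSet (sub_lt_self a hℓ) ℓ
  replace havoid : ∀ p ∈ V, ∀ j : ℕ, f p ≠ t + j * ℓ := fun p hp =>
    havoid (f p) (Finset.mem_coe.2 (Finset.mem_image_of_mem f hp))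
  obtain ⟨j, hj, hsparse⟩ := exists_card_filter_strip_mul_le_card V f hℓ t N.succ_ne_zero
  have hjN : j * ℓ ≤ N * ℓ := by gcongr; lia
  have hj_nonneg : 0 ≤ j * ℓ := by positivity
  refine ⟨t + j * ℓ, by linarith, by linarith, ?_, fun p hp => ⟨havoid p hp j, ?_⟩⟩
  · calc (#{p ∈ V | t + j * ℓ < f p ∧ f p < t + j * ℓ + ℓ} : ℝ) * (b - a)
        ≤ #{p ∈ V | t + j * ℓ < f p ∧ f p < t + j * ℓ + ℓ} * ((N + 1) * ℓ) := by gcongr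
      _ = #{p ∈ V | t + j * ℓ < f p ∧ f p < t + j * ℓ + ℓ} * (N + 1) * ℓ := by ring
      _ ≤ #V * ℓ := by gcongr; exact_mod_cast hsparse
  · simpa [add_mul, add_assoc] using havoid p hp (j + 1)

end SparseStrip

section Separator

open scoped Finset

variable {ι : Type*} [Fintype ι] {V : Finset (EuclideanSpace ℝ ι)}

lemma exists_sparse_strip_of_lt_card
    (hV : (V : Set (EuclideanSpace ℝ ι)).Pairwise (1 ≤ dist · ·)) {ℓ w : ℝ} (hℓ : 0 < ℓ)
    (hw : 0 < w) {k : ℕ}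
    (hcard : (⌊√(Fintype.card ι) * w⌋₊ + 1) ^ Fintype.card ι + 2 * Fintype.card ι * k < #V) :
    ∃ (i : ι) (c : ℝ), #{p ∈ V | c < p i ∧ p i < c + ℓ} ≤ #V * ℓ / w ∧
      #{p ∈ V | p i < c} + k < #V ∧ #{p ∈ V | c + ℓ < p i} + k < #V ∧
      ∀ p ∈ V, p i ≠ c ∧ p i ≠ c + ℓ := by
  have hk (i : ι) : k < #V := by
    have : k ≤ Fintype.card ι * k := Nat.le_mul_of_pos_left k (Fintype.card_pos_iff.2 ⟨i⟩)
    lia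
  choose a ha_lt ha_le using fun i =>
    exists_card_filter_lt_le_and_lt_card_filter_le V (fun p => p i) (hk i)
  choose b hb_gt hb_ge using fun i =>
    exists_card_filter_gt_le_and_lt_card_filter_ge V (fun p => p i) (hk i)
  obtain ⟨i, hi⟩ := exists_le_sub_of_card_filter_le hV ha_lt hb_gt hcard
  obtain ⟨c, hcb, hac, hstrip, havoid⟩ :=
    exists_sparse_strip V (fun p => p i) hℓ (sub_nonneg.1 (hw.le.trans hi))
  refine ⟨i, c, (le_div_iff₀ hw).2 (le_trans (by gcongr) hstrip), ?_, ?_, havoid⟩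
  · linarith [card_filter_lt_add_card_filter_ge_le_card V (fun p => p i) hcb, hb_ge i]
  · linarith [card_filter_gt_add_card_filter_le_le_card V (fun p => p i) hac, ha_le i]

lemma floor_add_one_pow_le {x : ℝ} (hx : 5 / 3 ≤ x) (d : ℕ) :
    ((⌊√d * (x ^ (d⁻¹ : ℝ) / (4 * d))⌋₊ : ℝ) + 1) ^ d ≤ 3 / 5 * x := by
  set y := √d * (x ^ (d⁻¹ : ℝ) / (4 * d)) with hy
  obtain hy_lt | hy_ge := lt_or_ge y 1
  · rw [Nat.floor_eq_zero.2 hy_lt, Nat.cast_zero, zero_add, one_pow]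
    linarith
  have hd : d ≠ 0 := by
    rintro rfl
    norm_num [hy] at hy_ge
  have hx_nonneg : 0 ≤ x := by linarith
  have hsqrt : √d / d ≤ 1 := by
    rw [Real.sqrt_div_self']
    exact div_le_one_of_le₀ (Real.one_le_sqrt.2 (by exact_mod_cast Nat.one_le_iff_ne_zero.2 hd))
      (Real.sqrt_nonneg _)
  have hy_le : y ≤ x ^ (d⁻¹ : ℝ) / 4 := by
    calc y = √d / d * (x ^ (d⁻¹ : ℝ) / 4) := by ring
      _ ≤ x ^ (d⁻¹ : ℝ) / 4 := mul_le_of_le_one_left (by positivity) hsqrt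
  calc ((⌊y⌋₊ : ℝ) + 1) ^ d ≤ (x ^ (d⁻¹ : ℝ) / 2) ^ d := by
        gcongr
        linarith [Nat.floor_le (zero_le_one.trans hy_ge)]
    _ = x / 2 ^ d := by rw [div_pow, Real.rpow_inv_natCast_pow hx_nonneg hd]
    _ ≤ x / 2 := by
      gcongr
      exact le_self_pow₀ one_le_two hd
    _ ≤ 3 / 5 * x := by linarith

lemma floor_add_one_pow_add_lt {n : ℕ} (hn : 2 ≤ n) (d : ℕ) :
    (⌊√d * ((n : ℝ) ^ (d⁻¹ : ℝ) / (4 * d))⌋₊ + 1) ^ d + 2 * d * ((n - 1) / (5 * d)) < n := by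
  have hpack : 5 * (⌊√d * ((n : ℝ) ^ (d⁻¹ : ℝ) / (4 * d))⌋₊ + 1) ^ d ≤ 3 * n := by
    have hn' : (2 : ℝ) ≤ n := by exact_mod_cast hn
    have := floor_add_one_pow_le (x := n) (by linarith) d
    rify
    linarith
  have hdiv : 5 * d * ((n - 1) / (5 * d)) ≤ n - 1 := Nat.mul_div_le _ _
  lia

lemma cast_le_of_add_pred_div_lt {m n d : ℕ} (hd : 0 < d) (h : m + (n - 1) / (5 * d) < n) :
    (m : ℝ) ≤ (1 - 1 / (5 * d)) * n := by
  set k := (n - 1) / (5 * d)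
  have hn_lt : n - 1 < 5 * d * (k + 1) := Nat.lt_mul_div_succ _ (by positivity)
  have hn_le : (n : ℝ) / (5 * d) ≤ k + 1 :=
    (div_le_iff₀' (by positivity)).2 (by exact_mod_cast Nat.le_of_pred_lt hn_lt)
  have hm : (m : ℝ) + k + 1 ≤ n := by exact_mod_cast h
  calc (m : ℝ) ≤ n - n / (5 * d) := by linarith
    _ = (1 - 1 / (5 * d)) * n := by ring

theorem separator_lemma_general {ℓ : ℝ} (hℓ : 0 < ℓ) (hcard : 2 ≤ #V)
    (hV : (V : Set (EuclideanSpace ℝ ι)).Pairwise (1 ≤ dist · ·)) :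
    ∃ (i : ι) (c₁ c₂ : ℝ), c₁ < c₂ ∧ ℓ ≤ c₂ - c₁ ∧
      #{p ∈ V | c₁ < p i ∧ p i < c₂} ≤
        4 * Fintype.card ι * ℓ * (#V : ℝ) ^ (1 - (Fintype.card ι : ℝ)⁻¹) ∧
      #{p ∈ V | p i < c₁} ≤ (1 - 1 / (5 * Fintype.card ι : ℝ)) * #V ∧
      #{p ∈ V | c₂ < p i} ≤ (1 - 1 / (5 * Fintype.card ι : ℝ)) * #V ∧
      ∀ p ∈ V, p i ≠ c₁ ∧ p i ≠ c₂ := by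
  have : Nonempty ι := not_isEmpty_iff.1 fun _ => by
    have := Finset.card_le_one_of_subsingleton V
    lia
  have hd : 0 < Fintype.card ι := Fintype.card_pos
  have hV_pos : (0 : ℝ) < #V := by exact_mod_cast zero_lt_two.trans_le hcard
  obtain ⟨i, c, hstrip, hleft, hright, havoid⟩ := exists_sparse_strip_of_lt_card hV hℓ
    (by positivity) (floor_add_one_pow_add_lt hcard (Fintype.card ι))
  refine ⟨i, c, c + ℓ, by linarith, by linarith, hstrip.trans_eq ?_,
    cast_le_of_add_pred_div_lt hd hleft, cast_le_of_add_pred_div_lt hd hright, havoid⟩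
  rw [Real.rpow_sub hV_pos, Real.rpow_one]
  field_simp

end Separator

/-- **Separator Lemma.** For any positive real `ℓ`, integer `n ≥ 10`, and
2D-embedded set `V` of `n` points in ℝ², there are two parallel axis-aligned
lines (both orthogonal to coordinate `i`) at positions `c₁ < c₂` with
`c₂ - c₁ ≥ ℓ`, such that the open strip between them contains at most `8ℓ√n`
points of `V`, each outer open region contains at most `9n/10` points of `V`,
and no point of `V` lies on either line. -/
theorem separator_lemma (ℓ : ℝ) (hℓ : 0 < ℓ) (n : ℕ) (hn : 10 ≤ n)
    (V : Finset (EuclideanSpace ℝ (Fin 2))) (hcard : V.card = n)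
    (hV : ∀ p ∈ V, ∀ q ∈ V, p ≠ q → 1 ≤ dist p q) :
    ∃ (i : Fin 2) (c₁ c₂ : ℝ), c₁ < c₂ ∧ ℓ ≤ c₂ - c₁ ∧
      ((V.filter (fun p => c₁ < p i ∧ p i < c₂)).card : ℝ) ≤ 8 * ℓ * Real.sqrt n ∧
      ((V.filter (fun p => p i < c₁)).card : ℝ) ≤ 9 * n / 10 ∧
      ((V.filter (fun p => c₂ < p i)).card : ℝ) ≤ 9 * n / 10 ∧
      (∀ p ∈ V, p i ≠ c₁ ∧ p i ≠ c₂) := by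
  subst hcard
  have hstrip : 4 * 2 * ℓ * (V.card : ℝ) ^ (1 - (2 : ℝ)⁻¹) = 8 * ℓ * √V.card := by
    rw [Real.sqrt_eq_rpow]
    norm_num
  have houter : (1 - 1 / (5 * 2)) * (V.card : ℝ) = 9 * V.card / 10 := by ring
  simpa only [Fintype.card_fin, Nat.cast_ofNat, hstrip, houter] using
    separator_lemma_general hℓ (by lia) fun p hp q hq => hV p hp q hq
end

section
/- Let n ≥ 10 be an integer, let V be a finite set of n points in ℝ², let ℓ be a real with 0 < ℓ ≤ √n/8, and let a₁ < a₂ be reals with a₂ − a₁ > √(n/10). Then there exist reals a₁′, a₂′ with a₁ ≤ a₁′ < a₂′ ≤ a₂ and a₂′ − a₁′ ≥ ℓ such that at most 8ℓ√n points (x,y) ∈ V satisfy a₁′ ≤ x ≤ a₂′. -/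
open scoped Classical

/-!
Cut `[a₁, a₂]` into `k = ⌊√n / (8ℓ)⌋ + 1` pieces of equal length. Since
`k * ℓ ≤ √n / 8 + ℓ ≤ √n / 4 ≤ √(n / 10) < a₂ - a₁`, each piece is longer than `ℓ`, so the strips of
width `ℓ` at the left ends of the pieces are pairwise disjoint even though they are closed. One of
them contains at most `n / k` of the `n` points, and `n / k ≤ 8ℓ√n` because `√n < 8ℓk`.
-/

theorem exists_card_mul_card_le_of_pairwiseDisjoint {κ ι : Type*} {I : Finset κ}
    (hI : I.Nonempty) {t : κ → Finset ι} (hdisj : (I : Set κ).PairwiseDisjoint t)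
    {V : Finset ι} (ht : ∀ i ∈ I, t i ⊆ V) :
    ∃ i ∈ I, I.card * (t i).card ≤ V.card := by
  obtain ⟨i, hi, hmin⟩ := I.exists_min_image (fun j => (t j).card) hI
  refine ⟨i, hi, ?_⟩
  calc I.card * (t i).card ≤ ∑ j ∈ I, (t j).card := I.card_nsmul_le_sum _ _ hmin
    _ = (I.biUnion t).card := (Finset.card_biUnion hdisj).symm
    _ ≤ V.card := Finset.card_le_card (Finset.biUnion_subset.mpr ht)

theorem pairwise_disjoint_Icc_add_nsmul {G : Type*} [AddCommGroup G] [PartialOrder G]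
    [IsOrderedAddMonoid G] (a : G) {d ℓ : G} (hd : 0 ≤ d) (hℓd : ℓ < d) :
    Pairwise (Function.onFun Disjoint fun i : ℕ => Set.Icc (a + i • d) (a + i • d + ℓ)) := by
  have hmono : Monotone fun i : ℕ => a + i • d := (nsmul_left_monotone hd).const_add a
  have hsub (i : ℕ) :
      Set.Icc (a + i • d) (a + i • d + ℓ) ⊆ Set.Ico (a + i • d) (a + (i + 1) • d) := by
    refine Set.Icc_subset_Ico_right ?_
    rw [succ_nsmul, ← add_assoc]
    gcongr
  exact hmono.pairwise_disjoint_on_Ico_succ.mono fun i j hij => hij.mono (hsub i) (hsub j)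

section OrderedField

variable {K ι : Type*} [Field K] [LinearOrder K] [IsStrictOrderedRing K]
  (V : Finset ι) (f : ι → K) {a b ℓ : K}

theorem exists_Icc_nat_mul_card_le {k : ℕ} (hk : k ≠ 0) (hℓ : 0 ≤ ℓ) (hkℓ : k * ℓ < b - a) :
    ∃ c, a ≤ c ∧ c + ℓ ≤ b ∧ k * (V.filter fun p => f p ∈ Set.Icc c (c + ℓ)).card ≤ V.card := by
  have hk0 : (0 : K) < k := Nat.cast_pos.mpr (Nat.pos_of_ne_zero hk)
  obtain ⟨d, hkd⟩ : ∃ d : K, k * d = b - a := ⟨(b - a) / k, mul_div_cancel₀ _ hk0.ne'⟩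
  have hℓd : ℓ < d := lt_of_mul_lt_mul_left (hkℓ.trans_eq hkd.symm) hk0.le
  have hd : 0 ≤ d := hℓ.trans hℓd.le
  let strip (i : ℕ) : Finset ι := V.filter fun p => f p ∈ Set.Icc (a + i • d) (a + i • d + ℓ)
  have hdisj : ((Finset.range k : Finset ℕ) : Set ℕ).PairwiseDisjoint strip :=
    fun i _ j _ hij => Finset.disjoint_filter.mpr fun _ _ hpi hpj =>
      (pairwise_disjoint_Icc_add_nsmul a hd hℓd hij).notMem_of_mem_left hpi hpj
  obtain ⟨i, hi, hcard⟩ := exists_card_mul_card_le_of_pairwiseDisjoint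
    (Finset.nonempty_range_iff.mpr hk) hdisj fun _ _ => Finset.filter_subset _ V
  refine ⟨a + i • d, le_add_of_nonneg_right (nsmul_nonneg hd i), ?_, ?_⟩
  · calc a + i • d + ℓ ≤ a + (i + 1) • d := by rw [succ_nsmul, ← add_assoc]; gcongr
      _ ≤ a + k • d := by gcongr; exact Finset.mem_range.mp hi
      _ = b := by rw [nsmul_eq_mul, hkd, add_sub_cancel]
  · rwa [Finset.card_range] at hcard

theorem exists_Icc_mul_card_le_mul_card [FloorSemiring K] (hℓ : 0 < ℓ) {w : K} (hw : 0 ≤ w)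
    (hgap : w + ℓ < b - a) :
    ∃ c, a ≤ c ∧ c + ℓ ≤ b ∧
      w * (V.filter fun p => f p ∈ Set.Icc c (c + ℓ)).card ≤ ℓ * V.card := by
  set k := ⌊w / ℓ⌋₊ + 1 with hk
  have hk_lower : w ≤ k * ℓ := by
    rw [← div_le_iff₀ hℓ, hk, Nat.cast_succ]
    exact (Nat.lt_floor_add_one _).le
  have hk_upper : k * ℓ ≤ w + ℓ := by
    have hfloor : ⌊w / ℓ⌋₊ * ℓ ≤ w := (le_div_iff₀ hℓ).mp (Nat.floor_le (by positivity))
    rw [hk, Nat.cast_succ, add_one_mul]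
    gcongr
  obtain ⟨c, hac, hcb, hcard⟩ :=
    exists_Icc_nat_mul_card_le V f (Nat.succ_ne_zero _) hℓ.le (hk_upper.trans_lt hgap)
  refine ⟨c, hac, hcb, ?_⟩
  set N := (V.filter fun p => f p ∈ Set.Icc c (c + ℓ)).card
  calc w * N ≤ k * ℓ * N := by gcongr
    _ = ℓ * (k * N : ℕ) := by push_cast; ring
    _ ≤ ℓ * V.card := by gcongr

end OrderedField

theorem sparse_strip_exists_general {ι : Type*} (V : Finset ι) (f : ι → ℝ) {ℓ : ℝ} (hℓ : 0 < ℓ)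
    {a₁ a₂ : ℝ} (hgap : Real.sqrt V.card / 8 + ℓ < a₂ - a₁) :
    ∃ a₁' a₂' : ℝ, a₁ ≤ a₁' ∧ a₁' < a₂' ∧ a₂' ≤ a₂ ∧ ℓ ≤ a₂' - a₁' ∧
      ((V.filter (fun p => a₁' ≤ f p ∧ f p ≤ a₂')).card : ℝ) ≤ 8 * ℓ * Real.sqrt V.card := by
  obtain ⟨c, hc₁, hc₂, hcard⟩ := exists_Icc_mul_card_le_mul_card V f hℓ (by positivity) hgap
  refine ⟨c, c + ℓ, hc₁, lt_add_of_pos_right c hℓ, hc₂, (add_sub_cancel_left c ℓ).ge, ?_⟩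
  rcases V.eq_empty_or_nonempty with rfl | hV
  · simp
  have hsqrt : 0 < Real.sqrt V.card / 8 := by have := hV.card_pos; positivity
  refine le_of_mul_le_mul_left ?_ hsqrt
  calc _ ≤ ℓ * V.card := hcard
    _ = ℓ * (Real.sqrt V.card * Real.sqrt V.card) := by rw [Real.mul_self_sqrt V.card.cast_nonneg]
    _ = Real.sqrt V.card / 8 * (8 * ℓ * Real.sqrt V.card) := by ring

theorem sqrt_div_four_le_sqrt_div_ten {x : ℝ} (hx : 0 ≤ x) :
    Real.sqrt x / 4 ≤ Real.sqrt (x / 10) := by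
  refine Real.le_sqrt_of_sq_le ?_
  rw [div_pow, Real.sq_sqrt hx]
  linarith

/-- Given a finite set `V` of `n ≥ 10` points in ℝ², a real `0 < ℓ ≤ √n / 8`,
and reals `a₁ < a₂` with `a₂ − a₁ > √(n/10)`, there is a vertical strip
`[a₁′, a₂′] ⊆ [a₁, a₂]` of width at least `ℓ` containing at most `8ℓ√n`
points of `V`. -/
theorem sparse_strip_exists (n : ℕ) (hn : 10 ≤ n)
    (V : Finset (ℝ × ℝ)) (hcard : V.card = n)
    (ℓ : ℝ) (hℓ0 : 0 < ℓ) (hℓ : ℓ ≤ Real.sqrt n / 8)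
    (a₁ a₂ : ℝ) (ha : a₁ < a₂) (hgap : Real.sqrt ((n : ℝ) / 10) < a₂ - a₁) :
    ∃ a₁' a₂' : ℝ, a₁ ≤ a₁' ∧ a₁' < a₂' ∧ a₂' ≤ a₂ ∧ ℓ ≤ a₂' - a₁' ∧
      ((V.filter (fun p => a₁' ≤ p.1 ∧ p.1 ≤ a₂')).card : ℝ)
        ≤ 8 * ℓ * Real.sqrt n := by
  subst hcard
  exact sparse_strip_exists_general V Prod.fst hℓ0
    (by linarith [sqrt_div_four_le_sqrt_div_ten V.card.cast_nonneg])
end
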